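/- arXiv:2205.00799 — 9 statements merged into one kernel-verified Lean document; each statement's English description precedes it below -/
import Mathlib

section
/- Let N ≥ 2 be an integer and let A, B : Fin N → ℝ be preference vectors (nonnegative entries, each summing to 1). If the popularity S i = A i + B i satisfies S i ≤ 1 for every arm i, then there exists a joint selection probability matrix P (P i i = 0, P i j ≥ 0, total sum 1) whose row sums equal A and whose column sums equal B; that is, the loss L(P) is zero. -/
/-!
Let `T` be the common total mass of `A` and `B`. Sending all mass through a single arm `k` gives a
star-shaped matrix with margins `A` and `B`: it vanishes outside row and column `k`, and all its
entries are nonnegative except `A k + B k - T` at `(k, k)`, which is at most `0`. The product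
matrix `A i * B j` has margins `T * A` and `T * B`, and its diagonal entry `A k * B k` can be
cancelled by a suitable nonnegative multiple of the star at `k`, unless `A k + B k = T`; in that
case the star at `k` alone has zero diagonal.
-/

variable {ι K : Type*} [Fintype ι] [Field K]

section HubMixture

variable [DecidableEq ι] {A B w : ι → K} {u : K}

/-- The normalized mixture of the product matrix `A i * B j`, with weight `u`, and of the stars at
the arms `k`, with weights `w k`. The star at `k` sends all mass through `k`: its entries are `A i`
in column `k` and `B j` in row `k`, except that its entry at `(k, k)` is `A k + B k - ∑ l, A l`. The
total mass is written `∑ l, A l`, and is meant to equal `∑ l, B l`. -/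
def hubMixture (A B w : ι → K) (u : K) (i j : ι) : K :=
  (u * (A i * B j) + w i * B j + A i * w j - if i = j then w i * ∑ l, A l else 0) /
    (u * ∑ l, A l + ∑ l, w l)

theorem hubMixture_swap (hAB : ∑ l, A l = ∑ l, B l) (i j : ι) :
    hubMixture B A w u j i = hubMixture A B w u i j := by
  unfold hubMixture
  rw [hAB]
  congr 1
  obtain rfl | hij := eq_or_ne i j
  · ring
  · rw [if_neg hij, if_neg hij.symm]
    ring

theorem sum_hubMixture_right (hAB : ∑ l, A l = ∑ l, B l)
    (hD : u * ∑ l, A l + ∑ l, w l ≠ 0) (i : ι) : ∑ j, hubMixture A B w u i j = A i := by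
  simp only [hubMixture]
  rw [← Finset.sum_div, div_eq_iff hD]
  simp only [Finset.sum_sub_distrib, Finset.sum_add_distrib, ← Finset.mul_sum,
    Finset.sum_ite_eq, Finset.mem_univ, if_true, ← hAB]
  ring

theorem sum_hubMixture_left (hAB : ∑ l, A l = ∑ l, B l)
    (hD : u * ∑ l, A l + ∑ l, w l ≠ 0) (j : ι) : ∑ i, hubMixture A B w u i j = B j := by
  simp only [← hubMixture_swap hAB]
  exact sum_hubMixture_right hAB.symm (hAB ▸ hD) j

theorem hubMixture_self {i : ι} (hw : w i * (∑ l, A l - (A i + B i)) = u * (A i * B i)) :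
    hubMixture A B w u i i = 0 := by
  rw [hubMixture, if_pos rfl, ← hw]
  ring

theorem hubMixture_nonneg_of_ne [LinearOrder K] [IsStrictOrderedRing K]
    (hA : ∀ i, 0 ≤ A i) (hB : ∀ i, 0 ≤ B i) (hu : 0 ≤ u) (hw : ∀ i, 0 ≤ w i)
    {i j : ι} (hij : i ≠ j) : 0 ≤ hubMixture A B w u i j := by
  have hT : 0 ≤ ∑ l, A l := Finset.sum_nonneg fun l _ ↦ hA l
  have hW : 0 ≤ ∑ l, w l := Finset.sum_nonneg fun l _ ↦ hw l
  have hAi := hA i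
  have hBj := hB j
  have hwi := hw i
  have hwj := hw j
  rw [hubMixture, if_neg hij, sub_zero]
  positivity

end HubMixture

variable [LinearOrder K] [IsStrictOrderedRing K] {A B : ι → K}

theorem exists_weights_hubMixture_self_eq_zero [Nonempty ι] [DecidableEq ι]
    (hA : ∀ i, 0 ≤ A i) (hB : ∀ i, 0 ≤ B i) (hS : ∀ i, A i + B i ≤ ∑ l, A l) :
    ∃ (u : K) (w : ι → K), 0 ≤ u ∧ (∀ i, 0 ≤ w i) ∧ 0 < u * ∑ l, A l + ∑ l, w l ∧
      ∀ i, hubMixture A B w u i i = 0 := by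
  by_cases hsat : ∃ k, A k + B k = ∑ l, A l
  · obtain ⟨k, hk⟩ := hsat
    refine ⟨0, Pi.single k 1, le_rfl, Pi.single_nonneg.2 zero_le_one, by simp,
      fun i ↦ hubMixture_self ?_⟩
    obtain rfl | hik := eq_or_ne i k
    · simp [hk]
    · simp [hik]
  · push Not at hsat
    have hgap i : 0 < ∑ l, A l - (A i + B i) := sub_pos.2 ((hS i).lt_of_ne (hsat i))
    have hT : 0 < ∑ l, A l := by
      obtain ⟨i⟩ := ‹Nonempty ι›
      linarith [hgap i, hA i, hB i]
    have hw i : 0 ≤ A i * B i / (∑ l, A l - (A i + B i)) :=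
      div_nonneg (mul_nonneg (hA i) (hB i)) (hgap i).le
    refine ⟨1, fun i ↦ A i * B i / (∑ l, A l - (A i + B i)), zero_le_one, hw, ?_,
      fun i ↦ hubMixture_self ?_⟩
    · rw [one_mul]
      exact add_pos_of_pos_of_nonneg hT (Finset.sum_nonneg fun i _ ↦ hw i)
    · rw [div_mul_cancel₀ _ (hgap i).ne', one_mul]

theorem zero_loss_of_popularity_le_one_general
    (hA : ∀ i, 0 ≤ A i) (hB : ∀ i, 0 ≤ B i) (hAB : ∑ l, A l = ∑ l, B l)
    (hS : ∀ i, A i + B i ≤ ∑ l, A l) :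
    ∃ P : ι → ι → K, (∀ i, P i i = 0) ∧ (∀ i j, 0 ≤ P i j) ∧
      (∀ i, ∑ j, P i j = A i) ∧ (∀ j, ∑ i, P i j = B j) := by
  classical
  cases isEmpty_or_nonempty ι
  · exact ⟨0, by simp⟩
  obtain ⟨u, w, hu, hw, hD, hdiag⟩ := exists_weights_hubMixture_self_eq_zero hA hB hS
  refine ⟨hubMixture A B w u, hdiag, fun i j ↦ ?_, sum_hubMixture_right hAB hD.ne',
    sum_hubMixture_left hAB hD.ne'⟩
  obtain rfl | hij := eq_or_ne i j
  · exact (hdiag i).ge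
  · exact hubMixture_nonneg_of_ne hA hB hu hw hij

/-- Theorem 1 (zero-loss case): if every popularity `A i + B i` is at most 1, there exists a
conflict-free joint selection probability matrix whose row sums equal `A` and whose column sums
equal `B`, i.e. the loss is zero. -/
theorem zero_loss_of_popularity_le_one
    (N : ℕ) (hN : 2 ≤ N) (A B : Fin N → ℝ)
    (hA0 : ∀ i, 0 ≤ A i) (hB0 : ∀ i, 0 ≤ B i)
    (hA1 : ∑ i, A i = 1) (hB1 : ∑ i, B i = 1)
    (hS : ∀ i, A i + B i ≤ 1) :
    ∃ P : Fin N → Fin N → ℝ,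
      (∀ i, P i i = 0) ∧ (∀ i j, 0 ≤ P i j) ∧ (∑ i, ∑ j, P i j = 1) ∧
      (∀ i, ∑ j, P i j = A i) ∧ (∀ j, ∑ i, P i j = B j) := by
  obtain ⟨P, hdiag, hP, hrow, hcol⟩ :=
    zero_loss_of_popularity_le_one_general hA0 hB0 (hA1.trans hB1.symm) (hA1 ▸ hS)
  exact ⟨P, hdiag, hP, by simp only [hrow, hA1], hrow, hcol⟩
end

section
/- Let N ≥ 2 be an integer, T ≥ 0 a real number, and let A, B : Fin N → ℝ be nonnegative vectors each summing to T. If A i + B i ≤ T for every index i, then there exists a matrix P : Fin N → Fin N → ℝ with P i i = 0 for all i and P i j ≥ 0 for all i, j, whose row sums equal A and whose column sums equal B. -/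
/-!
By Riesz decomposition, an element between `0` and a finite sum of nonnegative elements splits into
parts bounded by the summands. Serving the rows one after another in this way gives a nonnegative
matrix with the prescribed margins. Such a matrix carries mass `T - (A k + B k) + P k k` outside row
`k` and column `k`, which is at least `P k k` when `A k + B k ≤ T`. So one can choose there a
submass of total exactly `P k k` and exchange it with the cell `(k, k)`: a unit leaves `(i, j)` and
`(k, k)` and enters `(i, k)` and `(k, j)`. This preserves the margins, empties `(k, k)` and
increases no diagonal entry, so the diagonal can be cleared one entry at a time.
-/

section RieszDecomposition

variable {ι G : Type*} [AddCommGroup G] [Lattice G] [IsOrderedAddMonoid G]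

theorem exists_mem_Icc_sum_eq_of_le_sum {s : Finset ι} {p : ι → G} {e : G}
    (hp : ∀ i ∈ s, 0 ≤ p i) (he : 0 ≤ e) (hle : e ≤ ∑ i ∈ s, p i) :
    ∃ q : ι → G, (∀ i ∈ s, q i ∈ Set.Icc 0 (p i)) ∧ (∀ i ∉ s, q i = 0) ∧ ∑ i ∈ s, q i = e := by
  classical
  induction s using Finset.induction_on generalizing e with
  | empty => exact ⟨0, by simp, by simp, by simpa using he.antisymm hle⟩
  | insert a s ha ih =>
    rw [Finset.forall_mem_insert] at hp
    rw [Finset.sum_insert ha] at hle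
    have hrest_le : e - e ⊓ p a ≤ ∑ i ∈ s, p i := by
      rw [sub_le_comm]
      exact le_inf (sub_le_self e (Finset.sum_nonneg hp.2)) (sub_le_iff_le_add.mpr hle)
    obtain ⟨q, hq, hq0, hqsum⟩ := ih hp.2 (sub_nonneg.mpr inf_le_left) hrest_le
    refine ⟨Function.update q a (e ⊓ p a), fun i hi => ?_, fun i hi => ?_, ?_⟩
    · obtain rfl | hia := eq_or_ne i a
      · simpa using ⟨he, hp.1⟩
      · simpa [hia] using hq i (Finset.mem_of_mem_insert_of_ne hi hia)
    · rw [Finset.mem_insert, not_or] at hi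
      rw [Function.update_of_ne hi.1, hq0 i hi.2]
    · rw [Finset.sum_insert ha, Function.update_self, Finset.sum_update_of_notMem ha, hqsum,
        add_sub_cancel]

end RieszDecomposition

section Existence

variable {ι κ G : Type*} [Fintype κ] [AddCommGroup G] [Lattice G] [IsOrderedAddMonoid G]

theorem exists_nonneg_matrix_of_sum_eq_sum {s : Finset ι} {A : ι → G} {B : κ → G}
    (hA : ∀ i ∈ s, 0 ≤ A i) (hB : ∀ j, 0 ≤ B j) (hAB : ∑ i ∈ s, A i = ∑ j, B j) :
    ∃ P : ι → κ → G, (∀ i ∈ s, ∀ j, 0 ≤ P i j) ∧ (∀ i ∈ s, ∑ j, P i j = A i) ∧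
      ∀ j, ∑ i ∈ s, P i j = B j := by
  classical
  induction s using Finset.induction_on generalizing B with
  | empty =>
    have hB0 : ∀ j, B j = 0 := by
      simpa [Finset.sum_eq_zero_iff_of_nonneg, hB] using hAB.symm
    exact ⟨0, by simp, by simp, by simp [hB0]⟩
  | insert a s ha ih =>
    rw [Finset.forall_mem_insert] at hA
    rw [Finset.sum_insert ha] at hAB
    have hle : A a ≤ ∑ j, B j := hAB ▸ le_add_of_nonneg_right (Finset.sum_nonneg hA.2)
    obtain ⟨q, hq, -, hqsum⟩ := exists_mem_Icc_sum_eq_of_le_sum (fun j _ => hB j) hA.1 hle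
    obtain ⟨P, hP, hrow, hcol⟩ := ih (B := fun j => B j - q j) hA.2
      (fun j => sub_nonneg.mpr (hq j (Finset.mem_univ j)).2)
      (by rw [Finset.sum_sub_distrib, hqsum, ← hAB, add_sub_cancel_left])
    have hne : ∀ i ∈ s, Function.update P a q i = P i := fun i hi =>
      Function.update_of_ne (ne_of_mem_of_not_mem hi ha) q P
    refine ⟨Function.update P a q, ?_, ?_, fun j => ?_⟩
    · rw [Finset.forall_mem_insert, Function.update_self]
      exact ⟨fun j => (hq j (Finset.mem_univ j)).1, fun i hi => hne i hi ▸ hP i hi⟩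
    · rw [Finset.forall_mem_insert, Function.update_self]
      exact ⟨hqsum, fun i hi => hne i hi ▸ hrow i hi⟩
    · rw [Finset.sum_insert ha, Function.update_self,
        Finset.sum_congr rfl fun i hi => congrFun (hne i hi) j, hcol, add_sub_cancel]

/-- `P` is a transport plan from the supplies `A` to the demands `B`: a nonnegative matrix with
row sums `A` and column sums `B`. -/
structure IsTransportPlan {ι κ G : Type*} [Fintype ι] [Fintype κ] [AddCommMonoid G] [LE G]
    (A : ι → G) (B : κ → G) (P : ι → κ → G) : Prop where
  nonneg : ∀ i j, 0 ≤ P i j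
  row_sum : ∀ i, ∑ j, P i j = A i
  col_sum : ∀ j, ∑ i, P i j = B j

theorem IsTransportPlan.exists_of_sum_eq_sum [Fintype ι] {A : ι → G} {B : κ → G}
    (hA : ∀ i, 0 ≤ A i) (hB : ∀ j, 0 ≤ B j) (hAB : ∑ i, A i = ∑ j, B j) :
    ∃ P, IsTransportPlan A B P := by
  obtain ⟨P, hP, hrow, hcol⟩ :=
    exists_nonneg_matrix_of_sum_eq_sum (fun i (_ : i ∈ Finset.univ) => hA i) hB hAB
  exact ⟨P, fun i => hP i (Finset.mem_univ i), fun i => hrow i (Finset.mem_univ i), hcol⟩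

end Existence

/-- Reroute the mass `Q` through `k`: for all `i` and `j`, an amount `Q i j` is taken from each of
the cells `(i, j)` and `(k, k)` and added to each of `(i, k)` and `(k, j)`. The value is the
resulting change of a matrix. -/
def reroute {ι G : Type*} [Fintype ι] [DecidableEq ι] [AddCommGroup G]
    (k : ι) (Q : ι → ι → G) (i j : ι) : G :=
  (if j = k then ∑ l, Q i l else 0) + (if i = k then ∑ l, Q l j else 0)
    - (if i = k ∧ j = k then ∑ l, ∑ m, Q l m else 0) - Q i j

namespace reroute

variable {ι G : Type*} [Fintype ι] [DecidableEq ι] [AddCommGroup G]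

theorem row_sum (k : ι) (Q : ι → ι → G) (i : ι) : ∑ j, reroute k Q i j = 0 := by
  by_cases hi : i = k <;> simp [reroute, hi, Finset.sum_add_distrib, Finset.sum_comm (f := Q)]

theorem col_sum (k : ι) (Q : ι → ι → G) (j : ι) : ∑ i, reroute k Q i j = 0 := by
  by_cases hj : j = k <;> simp [reroute, hj, Finset.sum_add_distrib]

theorem apply_self_self {k : ι} {Q : ι → ι → G} (hrow : ∀ j, Q k j = 0) (hcol : ∀ i, Q i k = 0) :
    reroute k Q k k = -∑ i, ∑ j, Q i j := by
  simp [reroute, hrow, hcol]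

theorem apply_diag_of_ne {k i : ι} (Q : ι → ι → G) (hi : i ≠ k) :
    reroute k Q i i = -Q i i := by
  simp [reroute, hi]

theorem neg_le [PartialOrder G] [IsOrderedAddMonoid G] {k i j : ι} {Q : ι → ι → G}
    (hQ : ∀ i j, 0 ≤ Q i j) (hij : ¬(i = k ∧ j = k)) : -Q i j ≤ reroute k Q i j := by
  have hrow : 0 ≤ if j = k then ∑ l, Q i l else 0 :=
    ite_nonneg (Finset.sum_nonneg fun l _ => hQ i l) le_rfl
  have hcol : 0 ≤ if i = k then ∑ l, Q l j else 0 :=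
    ite_nonneg (Finset.sum_nonneg fun l _ => hQ l j) le_rfl
  simpa [reroute, hij] using add_nonneg hrow hcol

end reroute

namespace IsTransportPlan

variable {ι G : Type*} [Fintype ι] [AddCommGroup G] {A B : ι → G} {P : ι → ι → G}

theorem sum_erase_sum_erase [DecidableEq ι] [LE G] (hP : IsTransportPlan A B P) (k : ι) :
    ∑ i ∈ Finset.univ.erase k, ∑ j ∈ Finset.univ.erase k, P i j =
      ∑ i, A i - (A k + B k) + P k k := by
  simp only [Finset.sum_erase_eq_sub (Finset.mem_univ k), Finset.sum_sub_distrib, hP.row_sum,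
    hP.col_sum]
  abel

variable [Lattice G] [IsOrderedAddMonoid G]

theorem exists_le_sum_sum_eq_apply_self (hP : IsTransportPlan A B P) {k : ι}
    (hk : A k + B k ≤ ∑ i, A i) :
    ∃ Q : ι → ι → G, (∀ i j, Q i j ∈ Set.Icc 0 (P i j)) ∧ (∀ j, Q k j = 0) ∧ (∀ i, Q i k = 0) ∧
      ∑ i, ∑ j, Q i j = P k k := by
  classical
  let offCross : Finset (ι × ι) := Finset.univ.erase k ×ˢ Finset.univ.erase k
  have hle : P k k ≤ ∑ x ∈ offCross, P x.1 x.2 := by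
    rw [Finset.sum_product, hP.sum_erase_sum_erase]
    exact le_add_of_nonneg_left (sub_nonneg.mpr hk)
  obtain ⟨q, hq, hq0, hqsum⟩ :=
    exists_mem_Icc_sum_eq_of_le_sum (fun x _ => hP.nonneg x.1 x.2) (hP.nonneg k k) hle
  refine ⟨fun i j => q (i, j), fun i j => ?_, fun j => hq0 _ (by simp [offCross]),
    fun i => hq0 _ (by simp [offCross]), ?_⟩
  · by_cases hij : (i, j) ∈ offCross
    · exact hq _ hij
    · exact ⟨(hq0 _ hij).ge, (hq0 _ hij).trans_le (hP.nonneg i j)⟩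
  · rw [← hqsum, ← Fintype.sum_prod_type]
    exact (Finset.sum_subset (Finset.subset_univ _) fun x _ hx => hq0 x hx).symm

theorem exists_apply_self_eq_zero (hP : IsTransportPlan A B P) {k : ι}
    (hk : A k + B k ≤ ∑ i, A i) :
    ∃ P', IsTransportPlan A B P' ∧ P' k k = 0 ∧ ∀ i, P' i i ≤ P i i := by
  classical
  obtain ⟨Q, hQ, hrow, hcol, hQsum⟩ := hP.exists_le_sum_sum_eq_apply_self hk
  have hkk : P k k + reroute k Q k k = 0 := by
    rw [reroute.apply_self_self hrow hcol, hQsum, add_neg_cancel]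
  refine ⟨fun i j => P i j + reroute k Q i j, ⟨fun i j => ?_, fun i => ?_, fun j => ?_⟩, hkk,
    fun i => ?_⟩
  · by_cases hij : i = k ∧ j = k
    · rw [hij.1, hij.2, hkk]
    · calc
        0 ≤ P i j + -Q i j := by simpa using (hQ i j).2
        _ ≤ P i j + reroute k Q i j := by
          gcongr
          exact reroute.neg_le (fun i j => (hQ i j).1) hij
  · rw [Finset.sum_add_distrib, hP.row_sum, reroute.row_sum, add_zero]
  · rw [Finset.sum_add_distrib, hP.col_sum, reroute.col_sum, add_zero]
  · obtain rfl | hi := eq_or_ne i k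
    · exact hkk.trans_le (hP.nonneg i i)
    · simpa [reroute.apply_diag_of_ne Q hi] using (hQ i i).1

theorem exists_diag_eq_zero (hP : IsTransportPlan A B P) (s : Finset ι)
    (hS : ∀ i ∈ s, A i + B i ≤ ∑ j, A j) :
    ∃ P', IsTransportPlan A B P' ∧ ∀ i ∈ s, P' i i = 0 := by
  classical
  induction s using Finset.induction_on with
  | empty => exact ⟨P, hP, by simp⟩
  | insert k s _ ih =>
    rw [Finset.forall_mem_insert] at hS
    obtain ⟨R, hR, hRs⟩ := ih hS.2
    obtain ⟨P', hP', hkk, hdiag⟩ := hR.exists_apply_self_eq_zero hS.1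
    refine ⟨P', hP', (Finset.forall_mem_insert ..).mpr ⟨hkk, fun i hi => ?_⟩⟩
    exact ((hdiag i).trans_eq (hRs i hi)).antisymm (hP'.nonneg i i)

end IsTransportPlan

theorem exists_zero_diag_matrix_of_popularity_le_total_general {ι G : Type*} [Fintype ι]
    [AddCommGroup G] [Lattice G] [IsOrderedAddMonoid G] {A B : ι → G}
    (hA0 : ∀ i, 0 ≤ A i) (hB0 : ∀ i, 0 ≤ B i) (hAB : ∑ i, A i = ∑ i, B i)
    (hS : ∀ i, A i + B i ≤ ∑ j, A j) :
    ∃ P : ι → ι → G,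
      (∀ i, P i i = 0) ∧ (∀ i j, 0 ≤ P i j) ∧
      (∀ i, ∑ j, P i j = A i) ∧ (∀ j, ∑ i, P i j = B j) := by
  obtain ⟨P, hP⟩ := IsTransportPlan.exists_of_sum_eq_sum hA0 hB0 hAB
  obtain ⟨P', hP', hdiag⟩ := hP.exists_diag_eq_zero Finset.univ fun i _ => hS i
  exact ⟨P', fun i => hdiag i (Finset.mem_univ i), hP'.nonneg, hP'.row_sum, hP'.col_sum⟩

/-- Lemma 2.1: for nonnegative vectors `A`, `B` each summing to `T` with all popularities
`A i + B i ≤ T`, there exists a nonnegative matrix with zero diagonal whose row sums equal `A`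
and whose column sums equal `B`. -/
theorem exists_zero_diag_matrix_of_popularity_le_total
    (N : ℕ) (hN : 2 ≤ N) (T : ℝ) (hT : 0 ≤ T) (A B : Fin N → ℝ)
    (hA0 : ∀ i, 0 ≤ A i) (hB0 : ∀ i, 0 ≤ B i)
    (hA : ∑ i, A i = T) (hB : ∑ i, B i = T)
    (hS : ∀ i, A i + B i ≤ T) :
    ∃ P : Fin N → Fin N → ℝ,
      (∀ i, P i i = 0) ∧ (∀ i j, 0 ≤ P i j) ∧
      (∀ i, ∑ j, P i j = A i) ∧ (∀ j, ∑ i, P i j = B j) :=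
  exists_zero_diag_matrix_of_popularity_le_total_general hA0 hB0 (hA.trans hB.symm) (by rwa [hA])
end

section
/- Let n ≥ 4 be an integer, T ≥ 0 a real number, and A, B : Fin n → ℝ nonnegative vectors each summing to T with S i = A i + B i ≤ T for every i. Let K be an index attaining the minimum of S. Then there exist vectors q, r : Fin n → ℝ (the K-th row and K-th column of a joint selection matrix) such that: q and r are nonnegative, q K = 0 and r K = 0, ∑ j, q j = A K, ∑ i, r i = B K, q j ≤ B j for every j ≠ K, r i ≤ A i for every i ≠ K, and (A i − r i) + (B i − q i) ≤ T − S K for every i ≠ K. -/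
/-!
Fill the row and the column of `K` first at the most popular other arm `i`. What then remains of
`A i` and `B i` is `(A i - B K)⁺ + (B i - A K)⁺`, and each of the four ways to resolve the positive
parts is bounded by `T - S K`. No other arm `j` needs to be lowered: with a fourth arm `l`, the
bounds `S j ≤ S i` and `S K ≤ S l` give `2 (S j + S K) ≤ S i + S j + S K + S l ≤ 2 T`.
-/

open Finset

section Allocation

variable {ι M : Type*}

/-- A nonnegative distribution `q` of a total amount `a` over the sites of `s`, where site `i`
has capacity `c i`. An allocation is a function on the whole index type that vanishes off `s`,
so that it can serve as a row or a column with a zero diagonal entry. -/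
structure IsAllocation [AddCommMonoid M] [LE M] (s : Finset ι) (c : ι → M) (a : M)
    (q : ι → M) : Prop where
  nonneg : ∀ i, 0 ≤ q i
  le_capacity : ∀ i ∈ s, q i ≤ c i
  eq_zero : ∀ i ∉ s, q i = 0
  sum_eq : ∑ i ∈ s, q i = a

namespace IsAllocation

theorem sum_univ_eq [AddCommMonoid M] [LE M] [Fintype ι] {s : Finset ι} {c q : ι → M} {a : M}
    (hq : IsAllocation s c a q) : ∑ i, q i = a := by
  rw [← hq.sum_eq]
  exact (sum_subset (subset_univ s) fun i _ hi ↦ hq.eq_zero i hi).symm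

variable [AddCommGroup M] [Lattice M] {s : Finset ι} {c q : ι → M} {a : M} {i : ι}

theorem insert_update [DecidableEq ι] (hq : IsAllocation s c (a - a ⊓ c i) q) (hi : i ∉ s)
    (ha : 0 ≤ a) (hci : 0 ≤ c i) :
    IsAllocation (insert i s) c a (Function.update q i (a ⊓ c i)) where
  nonneg j := by
    rcases eq_or_ne j i with rfl | hji
    · simpa only [Function.update_self] using le_inf ha hci
    · simpa only [Function.update_of_ne hji] using hq.nonneg j
  le_capacity j hj := by
    rcases eq_or_ne j i with rfl | hji
    · simp only [Function.update_self, inf_le_right]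
    · simpa only [Function.update_of_ne hji] using
        hq.le_capacity j (mem_of_mem_insert_of_ne hj hji)
  eq_zero j hj := by
    rw [mem_insert, not_or] at hj
    simpa only [Function.update_of_ne hj.1] using hq.eq_zero j hj.2
  sum_eq := by
    rw [sum_insert hi, Function.update_self, sum_update_of_notMem hi, hq.sum_eq,
      add_sub_cancel]

end IsAllocation

variable [AddCommGroup M] [Lattice M] [IsOrderedAddMonoid M]

theorem sub_inf_eq_posPart_sub (a b : M) : a - a ⊓ b = (a - b)⁺ := by
  rw [inf_eq_sub_posPart_sub, sub_sub_cancel]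

theorem sub_inf_le_iff {a b t : M} (ht : 0 ≤ t) : a - a ⊓ b ≤ t ↔ a ≤ b + t := by
  rw [sub_inf_eq_posPart_sub, posPart_def, sup_le_iff, and_iff_left ht, sub_le_iff_le_add']

theorem posPart_add_posPart_le {x y t : M} (ht : 0 ≤ t) (hx : x ≤ t) (hy : y ≤ t)
    (hxy : x + y ≤ t) : x⁺ + y⁺ ≤ t := by
  simp only [posPart_def, add_sup, sup_add, add_zero, zero_add]
  exact sup_le (sup_le hxy hy) (sup_le hx ht)

theorem sub_inf_add_sub_inf_le {a b x y t : M} (hxy : x + y ≤ t) (hab : a + b ≤ t)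
    (hax : a + x ≤ t) (hby : b + y ≤ t) : (a - y ⊓ a) + (b - x ⊓ b) ≤ t - (x + y) := by
  rw [inf_comm y, inf_comm x, sub_inf_eq_posPart_sub, sub_inf_eq_posPart_sub]
  apply posPart_add_posPart_le
  · exact sub_nonneg.2 hxy
  · rwa [le_sub_iff_add_le, ← add_assoc, add_right_comm, sub_add_cancel]
  · rwa [le_sub_iff_add_le, ← add_assoc, sub_add_cancel]
  · rwa [le_sub_iff_add_le, sub_add_sub_comm, add_comm x, sub_add_cancel]

/-- The Riesz decomposition property of lattice-ordered groups. -/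
theorem exists_isAllocation (s : Finset ι) {c : ι → M} {a : M} (hc : ∀ i ∈ s, 0 ≤ c i)
    (ha : 0 ≤ a) (hac : a ≤ ∑ i ∈ s, c i) : ∃ q, IsAllocation s c a q := by
  classical
  induction s using Finset.induction_on generalizing a with
  | empty =>
    rw [sum_empty] at hac
    exact ⟨0, fun _ ↦ le_rfl, by simp, fun _ _ ↦ rfl, le_antisymm ha hac⟩
  | insert i s hi ih =>
    rw [forall_mem_insert] at hc
    rw [sum_insert hi] at hac
    have hrest : a - a ⊓ c i ≤ ∑ j ∈ s, c j := (sub_inf_le_iff (sum_nonneg hc.2)).2 hac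
    obtain ⟨q, hq⟩ := ih hc.2 (sub_nonneg.2 inf_le_left) hrest
    exact ⟨_, hq.insert_update hi ha hc.1⟩

theorem exists_isAllocation_apply_eq_inf {s : Finset ι} {c : ι → M} {a : M} {i : ι}
    (hi : i ∈ s) (hc : ∀ j ∈ s, 0 ≤ c j) (ha : 0 ≤ a) (hac : a ≤ ∑ j ∈ s, c j) :
    ∃ q, IsAllocation s c a q ∧ q i = a ⊓ c i := by
  classical
  have hc' : ∀ j ∈ s.erase i, 0 ≤ c j := fun j hj ↦ hc j (mem_of_mem_erase hj)
  have hrest : a - a ⊓ c i ≤ ∑ j ∈ s.erase i, c j := by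
    rwa [sub_inf_le_iff (sum_nonneg hc'), add_sum_erase s c hi]
  obtain ⟨q, hq⟩ := exists_isAllocation (s.erase i) hc' (sub_nonneg.2 inf_le_left) hrest
  refine ⟨_, insert_erase hi ▸ hq.insert_update (notMem_erase i s) ha (hc i hi), ?_⟩
  exact Function.update_self ..

end Allocation

theorem two_nsmul_add_le_sum {ι M : Type*} [Fintype ι] [AddCommMonoid M] [PartialOrder M]
    [IsOrderedAddMonoid M] (hcard : 4 ≤ Fintype.card ι) {S : ι → M} (hS : ∀ l, 0 ≤ S l)
    {i j K : ι} (hiK : i ≠ K) (hjK : j ≠ K) (hij : i ≠ j) (hji : S j ≤ S i)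
    (hK : ∀ l, S K ≤ S l) : 2 • (S j + S K) ≤ ∑ l, S l := by
  classical
  obtain ⟨l, -, hl⟩ : ∃ l ∈ univ, l ∉ ({i, j, K} : Finset ι) :=
    exists_mem_notMem_of_card_lt_card (card_le_three.trans_lt hcard)
  calc 2 • (S j + S K) = S K + (S j + (S j + S K)) := by rw [two_nsmul]; abel
    _ ≤ S l + (S i + (S j + S K)) := by gcongr; exact hK l
    _ = ∑ x ∈ {l, i, j, K}, S x := by
      rw [sum_insert hl, sum_insert (by simp [hij, hiK]), sum_pair hjK]
    _ ≤ ∑ x, S x := sum_le_sum_of_subset_of_nonneg (subset_univ _) fun x _ _ ↦ hS x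

theorem add_le_of_sum_le_two_nsmul {ι M : Type*} [Fintype ι] [AddCommMonoid M] [LinearOrder M]
    [IsOrderedCancelAddMonoid M] (hcard : 4 ≤ Fintype.card ι) {S : ι → M} (hS : ∀ l, 0 ≤ S l)
    {i j K : ι} (hiK : i ≠ K) (hjK : j ≠ K) (hij : i ≠ j) (hji : S j ≤ S i)
    (hK : ∀ l, S K ≤ S l) {t : M} (ht : ∑ l, S l ≤ 2 • t) : S j + S K ≤ t :=
  (nsmul_le_nsmul_iff_right two_ne_zero).1 <|
    (two_nsmul_add_le_sum hcard hS hiK hjK hij hji hK).trans ht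

theorem exists_Kth_row_and_column_general {ι M : Type*} [Fintype ι] [AddCommGroup M]
    [LinearOrder M] [IsOrderedAddMonoid M] (hcard : 4 ≤ Fintype.card ι) {T : M} {A B : ι → M}
    (hA0 : ∀ i, 0 ≤ A i) (hB0 : ∀ i, 0 ≤ B i) (hA : ∑ i, A i = T) (hB : ∑ i, B i = T)
    (hS : ∀ i, A i + B i ≤ T) {K : ι} (hK : ∀ i, A K + B K ≤ A i + B i) :
    ∃ q r : ι → M,
      (∀ j, 0 ≤ q j) ∧ (∀ i, 0 ≤ r i) ∧
      q K = 0 ∧ r K = 0 ∧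
      (∑ j, q j = A K) ∧ (∑ i, r i = B K) ∧
      (∀ j, j ≠ K → q j ≤ B j) ∧
      (∀ i, i ≠ K → r i ≤ A i) ∧
      (∀ i, i ≠ K → (A i - r i) + (B i - q i) ≤ T - (A K + B K)) := by
  classical
  have hne : (univ.erase K).Nonempty := by
    rw [← card_pos, card_erase_of_mem (mem_univ K), card_univ]
    omega
  obtain ⟨i, hi, hmax⟩ := exists_max_image (univ.erase K) (fun i ↦ A i + B i) hne
  have hrow : A K ≤ ∑ j ∈ univ.erase K, B j := by
    rw [sum_erase_eq_sub (mem_univ K), hB]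
    exact le_sub_iff_add_le.2 (hS K)
  have hcol : B K ≤ ∑ j ∈ univ.erase K, A j := by
    rw [sum_erase_eq_sub (mem_univ K), hA]
    exact le_sub_iff_add_le'.2 (hS K)
  obtain ⟨q, hq, hqi⟩ := exists_isAllocation_apply_eq_inf hi (fun j _ ↦ hB0 j) (hA0 K) hrow
  obtain ⟨r, hr, hri⟩ := exists_isAllocation_apply_eq_inf hi (fun j _ ↦ hA0 j) (hB0 K) hcol
  refine ⟨q, r, hq.nonneg, hr.nonneg, hq.eq_zero K (notMem_erase _ _),
    hr.eq_zero K (notMem_erase _ _), hq.sum_univ_eq, hr.sum_univ_eq,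
    fun j hj ↦ hq.le_capacity j (by simpa using hj),
    fun j hj ↦ hr.le_capacity j (by simpa using hj), fun j hjK ↦ ?_⟩
  have hiK : i ≠ K := ne_of_mem_erase hi
  rcases eq_or_ne i j with rfl | hij
  · have pair_le {f : ι → M} (hf0 : ∀ l, 0 ≤ f l) (hf : ∑ l, f l = T) : f i + f K ≤ T :=
      hf ▸ add_le_sum (fun l _ ↦ hf0 l) (mem_univ i) (mem_univ K) hiK
    rw [hri, hqi]
    exact sub_inf_add_sub_inf_le (hS K) (hS i) (pair_le hA0 hA) (pair_le hB0 hB)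
  · have hjS : A j + B j + (A K + B K) ≤ T := by
      refine add_le_of_sum_le_two_nsmul hcard (S := fun l ↦ A l + B l)
        (fun l ↦ add_nonneg (hA0 l) (hB0 l)) hiK hjK hij (hmax j (by simpa using hjK)) hK ?_
      rw [sum_add_distrib, hA, hB, two_nsmul]
    calc A j - r j + (B j - q j) ≤ A j + B j :=
          add_le_add (sub_le_self _ (hr.nonneg j)) (sub_le_self _ (hq.nonneg j))
      _ ≤ T - (A K + B K) := le_sub_iff_add_le.2 hjS

/-- Assumption 2.1 holds: there exist a `K`-th row `q` and a `K`-th column `r` satisfying all the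
required conditions, where `K` is the arm with the lowest popularity `S i = A i + B i`. -/
theorem exists_Kth_row_and_column
    (n : ℕ) (hn : 4 ≤ n) (T : ℝ) (hT : 0 ≤ T) (A B : Fin n → ℝ)
    (hA0 : ∀ i, 0 ≤ A i) (hB0 : ∀ i, 0 ≤ B i)
    (hA : ∑ i, A i = T) (hB : ∑ i, B i = T)
    (hS : ∀ i, A i + B i ≤ T)
    (K : Fin n) (hK : ∀ i, A K + B K ≤ A i + B i) :
    ∃ q r : Fin n → ℝ,
      (∀ j, 0 ≤ q j) ∧ (∀ i, 0 ≤ r i) ∧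
      q K = 0 ∧ r K = 0 ∧
      (∑ j, q j = A K) ∧ (∑ i, r i = B K) ∧
      (∀ j, j ≠ K → q j ≤ B j) ∧
      (∀ i, i ≠ K → r i ≤ A i) ∧
      (∀ i, i ≠ K → (A i - r i) + (B i - q i) ≤ T - (A K + B K)) := by
  exact exists_Kth_row_and_column_general (by simpa using hn) hA0 hB0 hA hB hS hK
end

section
/- Let n ≥ 4 be an integer, T ≥ 0 a real number, and A, B : Fin n → ℝ nonnegative vectors each summing to T with S i = A i + B i ≤ T for every i. Let K attain the minimum of S, let V attain the maximum of S, with K ≠ V, and suppose A K ≤ B V and B K ≤ A V. Then the vectors q, r : Fin n → ℝ defined by q V = A K, r V = B K, and q j = r j = 0 for all j ≠ V satisfy: q, r nonnegative, q K = r K = 0, ∑ j, q j = A K, ∑ i, r i = B K, q j ≤ B j for all j ≠ K, r i ≤ A i for all i ≠ K, and (A i − r i) + (B i − q i) ≤ T − S K for all i ≠ K. -/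
/-!
Write `S = A + B`. The arm `V` keeps popularity `S V - S K`, which is at most `T - S K`. An arm
`i ≠ V` keeps all of its popularity, so it has to satisfy `S i + S K ≤ T`. Pair `i` with `V`, which
is at least as popular; at least two further arms remain, each of popularity at least `S K`. Hence
`2 (S i + S K)` is at most the total popularity `2 T`.
-/

theorem single_le_iff_of_nonneg {ι R : Type*} [DecidableEq ι] [Zero R] [Preorder R]
    {f : ι → R} (hf : 0 ≤ f) {i : ι} {a : R} : Pi.single i a ≤ f ↔ a ≤ f i :=
  update_le_iff.trans (and_iff_left fun j _ => hf j)

theorem two_nsmul_add_min_le_sum {ι M : Type*} [Fintype ι] [AddCommMonoid M] [PartialOrder M]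
    [IsOrderedAddMonoid M] {S : ι → M} {i K V : ι} (hcard : 4 ≤ Fintype.card ι)
    (hK0 : 0 ≤ S K) (hK : ∀ j, S K ≤ S j) (hiV : i ≠ V) (hi : S i ≤ S V) :
    2 • (S i + S K) ≤ ∑ j, S j := by
  classical
  have two_le_card_compl : 2 ≤ (({i, V} : Finset ι)ᶜ).card := by
    rw [Finset.card_compl, Finset.card_pair hiV]
    omega
  have pair_bound : 2 • S i ≤ ∑ j ∈ {i, V}, S j := by
    rw [Finset.sum_pair hiV, two_nsmul]
    gcongr
  have compl_bound : 2 • S K ≤ ∑ j ∈ {i, V}ᶜ, S j :=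
    (nsmul_le_nsmul_left hK0 two_le_card_compl).trans
      (Finset.card_nsmul_le_sum _ _ _ fun j _ => hK j)
  calc
    2 • (S i + S K) = 2 • S i + 2 • S K := nsmul_add _ _ _
    _ ≤ ∑ j ∈ {i, V}, S j + ∑ j ∈ {i, V}ᶜ, S j := add_le_add pair_bound compl_bound
    _ = ∑ j, S j := Finset.sum_add_sum_compl _ _

section General

variable {ι R : Type*} [Fintype ι] [DecidableEq ι] [AddCommGroup R] [LinearOrder R]
  [IsOrderedAddMonoid R] {T : R} {K V : ι}

theorem sub_single_max_le_sub_min {S : ι → R} (hcard : 4 ≤ Fintype.card ι) (hK0 : 0 ≤ S K)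
    (hK : ∀ j, S K ≤ S j) (hV : ∀ j, S j ≤ S V) (hVT : S V ≤ T) (hsum : ∑ j, S j ≤ 2 • T) (i : ι) :
    S i - (Pi.single V (S K) : ι → R) i ≤ T - S K := by
  obtain rfl | hiV := eq_or_ne i V
  · rw [Pi.single_eq_same]
    exact sub_le_sub_right hVT _
  · have add_min_le : S i + S K ≤ T :=
      (nsmul_le_nsmul_iff_right two_ne_zero).mp
        ((two_nsmul_add_min_le_sum hcard hK0 hK hiV (hV i)).trans hsum)
    rwa [Pi.single_eq_of_ne hiV, sub_zero, le_sub_iff_add_le]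

theorem case_one_construction_general {A B : ι → R} (hcard : 4 ≤ Fintype.card ι)
    (hA0 : 0 ≤ A) (hB0 : 0 ≤ B) (hsum : ∑ i, A i + ∑ i, B i ≤ 2 • T) (hVT : A V + B V ≤ T)
    (hKV : K ≠ V) (hK : ∀ i, A K + B K ≤ A i + B i) (hV : ∀ i, A i + B i ≤ A V + B V)
    (hAKBV : A K ≤ B V) (hBKAV : B K ≤ A V) :
    let q : ι → R := Pi.single V (A K)
    let r : ι → R := Pi.single V (B K)
    0 ≤ q ∧ 0 ≤ r ∧ q K = 0 ∧ r K = 0 ∧ ∑ j, q j = A K ∧ ∑ i, r i = B K ∧ q ≤ B ∧ r ≤ A ∧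
      ∀ i, (A i - r i) + (B i - q i) ≤ T - (A K + B K) := by
  intro q r
  have residual_eq (i : ι) : (A i - r i) + (B i - q i) =
      (A i + B i) - (Pi.single V (A K + B K) : ι → R) i := by
    rw [sub_add_sub_comm, add_comm (r i), Pi.single_add, Pi.add_apply]
  refine ⟨Pi.single_nonneg.mpr (hA0 K), Pi.single_nonneg.mpr (hB0 K),
    Pi.single_eq_of_ne hKV _, Pi.single_eq_of_ne hKV _,
    Fintype.sum_pi_single' V _, Fintype.sum_pi_single' V _,
    (single_le_iff_of_nonneg hB0).mpr hAKBV, (single_le_iff_of_nonneg hA0).mpr hBKAV, fun i => ?_⟩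
  rw [residual_eq]
  exact sub_single_max_le_sub_min (S := fun j => A j + B j) hcard
    (add_nonneg (hA0 K) (hB0 K)) hK hV hVT ((Finset.sum_add_distrib ..).trans_le hsum) i

end General

/-- Case 1 of the verification of Assumption 2.1: when `A K ≤ B V` and `B K ≤ A V`, placing all
of `A K` at position `(K, V)` and all of `B K` at position `(V, K)` satisfies every condition. -/
theorem case_one_construction
    (n : ℕ) (hn : 4 ≤ n) (T : ℝ) (hT : 0 ≤ T) (A B : Fin n → ℝ)
    (hA0 : ∀ i, 0 ≤ A i) (hB0 : ∀ i, 0 ≤ B i)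
    (hA : ∑ i, A i = T) (hB : ∑ i, B i = T)
    (hS : ∀ i, A i + B i ≤ T)
    (K V : Fin n) (hKV : K ≠ V)
    (hK : ∀ i, A K + B K ≤ A i + B i)
    (hV : ∀ i, A i + B i ≤ A V + B V)
    (hAKBV : A K ≤ B V) (hBKAV : B K ≤ A V) :
    let q : Fin n → ℝ := fun j => if j = V then A K else 0
    let r : Fin n → ℝ := fun i => if i = V then B K else 0
    (∀ j, 0 ≤ q j) ∧ (∀ i, 0 ≤ r i) ∧
    q K = 0 ∧ r K = 0 ∧
    (∑ j, q j = A K) ∧ (∑ i, r i = B K) ∧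
    (∀ j, j ≠ K → q j ≤ B j) ∧
    (∀ i, i ≠ K → r i ≤ A i) ∧
    (∀ i, i ≠ K → (A i - r i) + (B i - q i) ≤ T - (A K + B K)) := by
  simp only [← Pi.single_apply]
  obtain ⟨hq0, hr0, hqK, hrK, hq, hr, hqB, hrA, hres⟩ := case_one_construction_general
    (by rwa [Fintype.card_fin]) hA0 hB0 (by rw [hA, hB, two_nsmul]) (hS V) hKV hK hV hAKBV hBKAV
  exact ⟨hq0, hr0, hqK, hrK, hq, hr, fun j _ => hqB j, fun i _ => hrA i, fun i _ => hres i⟩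
end

section
/- Let N ≥ 2 be an integer and let A, B : Fin N → ℝ be preference vectors (nonnegative entries, each summing to 1). Let m be an index with S m = max over i of S i and suppose S m > 1. Then the value (N / (2 * (N − 1))) * (S m − 1)² is the minimum of the loss L(P) over all joint selection probability matrices P; that is, every such P satisfies L(P) ≥ (N / (2 * (N − 1))) * (S m − 1)², and some such P attains this value. -/
/-!
The deviations `x = π_A - A` and `y = π_B - B` are zero-sum vectors, and Cauchy–Schwarz on the arms
other than `m` bounds the squared norm of a zero-sum vector of length `N` below by
`N / (N - 1)` times the square of its `m`-th entry. Since no entry of `P` lies in both row `m` and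
column `m` except the vanishing diagonal one, `π_A m + π_B m ≤ 1`, so `x m + y m ≤ -(S m - 1)`, and
`x m ^ 2 + y m ^ 2` is at least half the square of the right-hand side. All these inequalities are
equalities when `P` is supported on row `m` and column `m` and spreads the excess `S m - 1` evenly:
each player's preference for every other arm is exceeded by the same `c = (S m - 1) / (2 (N - 1))`.
-/

open Finset

section ZeroSum

variable {ι R : Type*} [Fintype ι] [CommRing R]

lemma card_mul_sq_le_card_sub_one_mul_sum_sq [LinearOrder R] [IsStrictOrderedRing R]
    {x : ι → R} (hx : ∑ i, x i = 0) (m : ι) :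
    Fintype.card ι * x m ^ 2 ≤ (Fintype.card ι - 1) * ∑ i, x i ^ 2 := by
  classical
  have cauchy_schwarz : (∑ i ∈ univ.erase m, x i) ^ 2 ≤
      #(univ.erase m) * ∑ i ∈ univ.erase m, x i ^ 2 := sq_sum_le_card_mul_sum_sq
  rw [sum_erase_eq_sub (mem_univ m), sum_erase_eq_sub (mem_univ m), hx,
    cast_card_erase_of_mem (mem_univ m), card_univ] at cauchy_schwarz
  linarith

lemma sum_sq_of_eq_const_off {x : ι → R} (hx : ∑ i, x i = 0) {m : ι} {c : R}
    (hc : ∀ i ≠ m, x i = c) :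
    ∑ i, x i ^ 2 = Fintype.card ι * (Fintype.card ι - 1) * c ^ 2 := by
  classical
  have sum_off (f : R → R) : ∑ i ∈ univ.erase m, f (x i) = (Fintype.card ι - 1) * f c := by
    rw [sum_congr rfl fun i hi ↦ by rw [hc i (ne_of_mem_erase hi)], sum_const, nsmul_eq_mul,
      cast_card_erase_of_mem (mem_univ m), card_univ]
  have hxm : x m = -((Fintype.card ι - 1) * c) := by
    rw [← add_sum_erase univ x (mem_univ m)] at hx
    exact (eq_neg_of_add_eq_zero_left hx).trans (congrArg Neg.neg (sum_off fun r ↦ r))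
  rw [← add_sum_erase univ (fun i ↦ x i ^ 2) (mem_univ m), sum_off (· ^ 2), hxm]
  ring

end ZeroSum

section Marginals

variable {ι M : Type*} [Fintype ι] [AddCommMonoid M]

/-- The satisfied preferences `π_A` of player `A`, who picks the row of the matrix `P`. -/
def rowMarginal (P : ι → ι → M) (i : ι) : M := ∑ j, P i j

/-- The satisfied preferences `π_B` of player `B`, who picks the column of the matrix `P`. -/
def colMarginal (P : ι → ι → M) (j : ι) : M := ∑ i, P i j

lemma rowMarginal_add_colMarginal_le_sum [PartialOrder M] [IsOrderedAddMonoid M]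
    {P : ι → ι → M} (hP : ∀ i j, 0 ≤ P i j) {m : ι} (hm : P m m = 0) :
    rowMarginal P m + colMarginal P m ≤ ∑ i, ∑ j, P i j := by
  classical
  have colMarginal_eq : colMarginal P m = ∑ i ∈ univ.erase m, P i m :=
    (sum_erase (f := fun i ↦ P i m) univ hm).symm
  rw [colMarginal_eq, ← add_sum_erase univ (fun i ↦ ∑ j, P i j) (mem_univ m)]
  gcongr with i
  · rfl
  · exact single_le_sum (fun j _ ↦ hP i j) (mem_univ m)

end Marginals

section CrossMatrix

variable {ι M : Type*} [DecidableEq ι]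

/-- The matrix supported on row `m` and column `m`, with column entries `a`, row entries `b` and
`0` where the two cross. With `a` and `b` close to the preferences of the players, this is the shape
of an optimal joint selection when arm `m` is too popular. -/
def crossMatrix [Zero M] (m : ι) (a b : ι → M) (i j : ι) : M :=
  if i = m then if j = m then 0 else b j else if j = m then a i else 0

lemma crossMatrix_diag [Zero M] (m : ι) (a b : ι → M) (i : ι) : crossMatrix m a b i i = 0 := by
  unfold crossMatrix
  split_ifs <;> rfl

lemma crossMatrix_nonneg [Zero M] [Preorder M] {m : ι} {a b : ι → M}
    (ha : ∀ i, 0 ≤ a i) (hb : ∀ j, 0 ≤ b j) (i j : ι) : 0 ≤ crossMatrix m a b i j := by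
  unfold crossMatrix
  split_ifs
  exacts [le_rfl, hb j, ha i, le_rfl]

variable [Fintype ι] [AddCommMonoid M]

lemma rowMarginal_crossMatrix_of_ne {m i : ι} (hi : i ≠ m) (a b : ι → M) :
    rowMarginal (crossMatrix m a b) i = a i := by
  simp [rowMarginal, crossMatrix, hi]

lemma colMarginal_crossMatrix_of_ne {m j : ι} (hj : j ≠ m) (a b : ι → M) :
    colMarginal (crossMatrix m a b) j = b j := by
  simp [colMarginal, crossMatrix, hj]

lemma rowMarginal_crossMatrix_self (m : ι) (a b : ι → M) :
    rowMarginal (crossMatrix m a b) m = ∑ j ∈ univ.erase m, b j := by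
  rw [rowMarginal, ← sum_erase univ (crossMatrix_diag m a b m)]
  refine sum_congr rfl fun j hj ↦ ?_
  simp [crossMatrix, ne_of_mem_erase hj]

lemma sum_crossMatrix (m : ι) (a b : ι → M) :
    ∑ i, ∑ j, crossMatrix m a b i j = ∑ j ∈ univ.erase m, b j + ∑ i ∈ univ.erase m, a i := by
  rw [← add_sum_erase univ (fun i ↦ ∑ j, crossMatrix m a b i j) (mem_univ m)]
  exact congrArg₂ (· + ·) (rowMarginal_crossMatrix_self m a b)
    (sum_congr rfl fun i hi ↦ rowMarginal_crossMatrix_of_ne (ne_of_mem_erase hi) a b)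

end CrossMatrix

section Loss

variable {ι R : Type*} [Fintype ι] [CommRing R]

/-- The loss `L(P)`: the squared distance between the satisfied preferences under `P` and the
preferences `A`, `B` of the two players. -/
def loss (A B : ι → R) (P : ι → ι → R) : R :=
  ∑ i, (rowMarginal P i - A i) ^ 2 + ∑ j, (colMarginal P j - B j) ^ 2

variable [LinearOrder R]

/-- Joint selection probability matrices: `P i j` is the probability that player `A` is given arm
`i` and player `B` arm `j`, where the two never receive the same arm. -/
structure IsJointSelection (P : ι → ι → R) : Prop where
  diag_eq_zero : ∀ i, P i i = 0
  nonneg : ∀ i j, 0 ≤ P i j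
  sum_eq_one : ∑ i, ∑ j, P i j = 1

namespace IsJointSelection

variable {A B : ι → R} {P : ι → ι → R}

lemma sum_rowMarginal_sub (hP : IsJointSelection P) (hA : ∑ i, A i = 1) :
    ∑ i, (rowMarginal P i - A i) = 0 := by
  rw [sum_sub_distrib, hA, sub_eq_zero]
  exact hP.sum_eq_one

lemma sum_colMarginal_sub (hP : IsJointSelection P) (hB : ∑ j, B j = 1) :
    ∑ j, (colMarginal P j - B j) = 0 := by
  rw [sum_sub_distrib, hB, sub_eq_zero]
  exact sum_comm.trans hP.sum_eq_one

lemma loss_eq_of_sub_eq_const_off (hP : IsJointSelection P)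
    (hA : ∑ i, A i = 1) (hB : ∑ j, B j = 1) {m : ι} {c : R}
    (hrow : ∀ i ≠ m, rowMarginal P i - A i = c) (hcol : ∀ j ≠ m, colMarginal P j - B j = c) :
    loss A B P = 2 * (Fintype.card ι * (Fintype.card ι - 1) * c ^ 2) := by
  rw [loss, sum_sq_of_eq_const_off (hP.sum_rowMarginal_sub hA) hrow,
    sum_sq_of_eq_const_off (hP.sum_colMarginal_sub hB) hcol, two_mul]

variable [IsStrictOrderedRing R]

lemma sq_popularity_sub_one_le (hP : IsJointSelection P) {m : ι} (hS : 1 ≤ A m + B m) :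
    (A m + B m - 1) ^ 2 ≤ 2 * ((rowMarginal P m - A m) ^ 2 + (colMarginal P m - B m) ^ 2) := by
  have marginals_le : rowMarginal P m + colMarginal P m ≤ 1 :=
    (rowMarginal_add_colMarginal_le_sum hP.nonneg (hP.diag_eq_zero m)).trans_eq hP.sum_eq_one
  calc (A m + B m - 1) ^ 2
      ≤ ((A m - rowMarginal P m) + (B m - colMarginal P m)) ^ 2 :=
        pow_le_pow_left₀ (by linarith) (by linarith) 2
    _ ≤ 2 * ((A m - rowMarginal P m) ^ 2 + (B m - colMarginal P m) ^ 2) := add_sq_le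
    _ = 2 * ((rowMarginal P m - A m) ^ 2 + (colMarginal P m - B m) ^ 2) := by ring

end IsJointSelection

variable [IsStrictOrderedRing R] {A B : ι → R}

lemma isJointSelection_crossMatrix_add_const [DecidableEq ι]
    (hA : A ∈ stdSimplex R ι) (hB : B ∈ stdSimplex R ι) {m : ι} {c : R} (hc : 0 ≤ c)
    (hS : 2 * (Fintype.card ι - 1) * c = A m + B m - 1) :
    IsJointSelection (crossMatrix m (fun i ↦ A i + c) (fun j ↦ B j + c)) where
  diag_eq_zero := crossMatrix_diag m _ _
  nonneg := crossMatrix_nonneg (fun i ↦ add_nonneg (hA.1 i) hc) (fun j ↦ add_nonneg (hB.1 j) hc)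
  sum_eq_one := by
    rw [sum_crossMatrix]
    simp only [sum_erase_eq_sub (mem_univ m), sum_add_distrib, hA.2, hB.2, sum_const, card_univ,
      nsmul_eq_mul]
    linarith

end Loss

section MinLoss

variable {ι K : Type*} [Fintype ι] [Nontrivial ι] [Field K] [LinearOrder K] [IsStrictOrderedRing K]
  {A B : ι → K}

lemma IsJointSelection.le_loss {P : ι → ι → K} (hP : IsJointSelection P)
    (hA : ∑ i, A i = 1) (hB : ∑ j, B j = 1) {m : ι} (hS : 1 ≤ A m + B m) :
    Fintype.card ι / (2 * (Fintype.card ι - 1)) * (A m + B m - 1) ^ 2 ≤ loss A B P := by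
  have card_sub_one_pos : (0 : K) < Fintype.card ι - 1 :=
    sub_pos.2 (Nat.one_lt_cast.2 Fintype.one_lt_card)
  rw [div_mul_eq_mul_div, div_le_iff₀ (by positivity)]
  calc Fintype.card ι * (A m + B m - 1) ^ 2
      ≤ Fintype.card ι * (2 * ((rowMarginal P m - A m) ^ 2 + (colMarginal P m - B m) ^ 2)) := by
        gcongr
        exact hP.sq_popularity_sub_one_le hS
    _ = 2 * (Fintype.card ι * (rowMarginal P m - A m) ^ 2 +
          Fintype.card ι * (colMarginal P m - B m) ^ 2) := by ring
    _ ≤ 2 * ((Fintype.card ι - 1) * ∑ i, (rowMarginal P i - A i) ^ 2 +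
          (Fintype.card ι - 1) * ∑ j, (colMarginal P j - B j) ^ 2) := by
        gcongr 2 * (?_ + ?_)
        · exact card_mul_sq_le_card_sub_one_mul_sum_sq (hP.sum_rowMarginal_sub hA) m
        · exact card_mul_sq_le_card_sub_one_mul_sum_sq (hP.sum_colMarginal_sub hB) m
    _ = loss A B P * (2 * (Fintype.card ι - 1)) := by
        rw [loss]
        ring

lemma exists_isJointSelection_loss_eq
    (hA : A ∈ stdSimplex K ι) (hB : B ∈ stdSimplex K ι) {m : ι} (hS : 1 ≤ A m + B m) :
    ∃ P, IsJointSelection P ∧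
      loss A B P = Fintype.card ι / (2 * (Fintype.card ι - 1)) * (A m + B m - 1) ^ 2 := by
  classical
  have card_sub_one_pos : (0 : K) < Fintype.card ι - 1 :=
    sub_pos.2 (Nat.one_lt_cast.2 Fintype.one_lt_card)
  obtain ⟨c, hc⟩ : ∃ c : K, 2 * (Fintype.card ι - 1) * c = A m + B m - 1 :=
    ⟨_, mul_div_cancel₀ _ (by positivity)⟩
  have c_nonneg : 0 ≤ c :=
    nonneg_of_mul_nonneg_right (hc ▸ sub_nonneg.2 hS) (by positivity)
  have hP := isJointSelection_crossMatrix_add_const hA hB c_nonneg hc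
  refine ⟨_, hP, ?_⟩
  rw [hP.loss_eq_of_sub_eq_const_off hA.2 hB.2
    (fun i hi ↦ by rw [rowMarginal_crossMatrix_of_ne hi, add_sub_cancel_left])
    (fun j hj ↦ by rw [colMarginal_crossMatrix_of_ne hj, add_sub_cancel_left]), ← hc]
  field_simp

theorem min_loss_eq_of_popularity_gt_one_general
    (hA : A ∈ stdSimplex K ι) (hB : B ∈ stdSimplex K ι) {m : ι} (hS : 1 ≤ A m + B m) :
    IsLeast (loss A B '' {P | IsJointSelection P})
      (Fintype.card ι / (2 * (Fintype.card ι - 1)) * (A m + B m - 1) ^ 2) :=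
  ⟨exists_isJointSelection_loss_eq hA hB hS,
    Set.forall_mem_image.2 fun _ (hP : IsJointSelection _) ↦ hP.le_loss hA.2 hB.2 hS⟩

end MinLoss

/-- Theorem 2.2: if the maximum popularity `S m = A m + B m` exceeds 1, then the minimum loss over
all conflict-free joint selection probability matrices equals `N / (2 (N − 1)) · (S m − 1)²`:
every matrix has loss at least this value, and some matrix attains it. -/
theorem min_loss_eq_of_popularity_gt_one
    (N : ℕ) (hN : 2 ≤ N) (A B : Fin N → ℝ)
    (hA0 : ∀ i, 0 ≤ A i) (hB0 : ∀ i, 0 ≤ B i)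
    (hA1 : ∑ i, A i = 1) (hB1 : ∑ i, B i = 1)
    (m : Fin N) (hm : ∀ i, A i + B i ≤ A m + B m) (hSm : 1 < A m + B m) :
    (∀ P : Fin N → Fin N → ℝ,
        (∀ i, P i i = 0) → (∀ i j, 0 ≤ P i j) → (∑ i, ∑ j, P i j = 1) →
        (N : ℝ) / (2 * ((N : ℝ) - 1)) * (A m + B m - 1) ^ 2 ≤
          (∑ i, ((∑ j, P i j) - A i) ^ 2 + ∑ j, ((∑ i, P i j) - B j) ^ 2)) ∧
    (∃ P : Fin N → Fin N → ℝ,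
        (∀ i, P i i = 0) ∧ (∀ i j, 0 ≤ P i j) ∧ (∑ i, ∑ j, P i j = 1) ∧
        (∑ i, ((∑ j, P i j) - A i) ^ 2 + ∑ j, ((∑ i, P i j) - B j) ^ 2) =
          (N : ℝ) / (2 * ((N : ℝ) - 1)) * (A m + B m - 1) ^ 2) := by
  have : Nontrivial (Fin N) := Fin.nontrivial_iff_two_le.2 hN
  obtain ⟨⟨P, hP, hloss⟩, hle⟩ :=
    min_loss_eq_of_popularity_gt_one_general ⟨hA0, hA1⟩ ⟨hB0, hB1⟩ hSm.le
  rw [Fintype.card_fin] at hloss hle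
  exact ⟨fun Q h0 hn h1 ↦ hle ⟨Q, ⟨h0, hn, h1⟩, rfl⟩,
    P, hP.diag_eq_zero, hP.nonneg, hP.sum_eq_one, hloss⟩
end

section
/- Let N ≥ 2 be an integer and let A, B : Fin N → ℝ be preference vectors (nonnegative entries, each summing to 1) with S i ≤ S (N−1) for all i (the last arm is most popular) and S (N−1) > 1. Set ε = (S (N−1) − 1) / (2 * (N − 1)) and define the matrix P̃ by P̃ i (N−1) = A i + ε for i ≠ N−1, P̃ (N−1) j = B j + ε for j ≠ N−1, and P̃ i j = 0 otherwise. Then P̃ is a joint selection probability matrix (zero diagonal, nonnegative entries, total sum 1) and its loss equals L(P̃) = (N / (2 * (N − 1))) * (S (N−1) − 1)². -/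
/-!
Write `n` for the number of arms and `m` for the popular arm. Away from `m`, each player receives
`ε` more than they prefer, so `m` must absorb the opposite deviation `-(n - 1) ε`: the value of `ε`
is the one at which the total mass stays `1`. Hence either player's share of the loss is
`(n - 1) ε² + ((n - 1) ε)² = n (n - 1) ε²`, and exchanging the players transposes the matrix.
-/

open Finset

variable {ι R : Type*}

section HubMatrix

variable [DecidableEq ι]

/-- The matrix supported on the row and the column of `m`, with zero diagonal: off the diagonal its
column `m` is `a` and its row `m` is `b`. It describes joint selections in which exactly one player
gets the arm `m`; the values `a m` and `b m` are ignored. -/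
def hubMatrix [Zero R] (m : ι) (a b : ι → R) (i j : ι) : R :=
  if i ≠ m ∧ j = m then a i else if i = m ∧ j ≠ m then b j else 0

lemma hubMatrix_self [Zero R] (m : ι) (a b : ι → R) (i : ι) : hubMatrix m a b i i = 0 := by
  by_cases hi : i = m <;> simp [hubMatrix, hi]

lemma hubMatrix_swap [Zero R] (m : ι) (a b : ι → R) (i j : ι) :
    hubMatrix m b a j i = hubMatrix m a b i j := by
  by_cases hi : i = m <;> by_cases hj : j = m <;> simp [hubMatrix, hi, hj]

lemma hubMatrix_nonneg [Zero R] [Preorder R] {m : ι} {a b : ι → R}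
    (ha : ∀ i ≠ m, 0 ≤ a i) (hb : ∀ j ≠ m, 0 ≤ b j) (i j : ι) : 0 ≤ hubMatrix m a b i j := by
  unfold hubMatrix
  split_ifs with hi hj
  exacts [ha i hi.1, hb j hj.2, le_rfl]

variable [Fintype ι]

lemma sum_hubMatrix_of_ne [AddCommMonoid R] {m i : ι} (hi : i ≠ m) (a b : ι → R) :
    ∑ j, hubMatrix m a b i j = a i := by
  simp [hubMatrix, hi]

lemma sum_hubMatrix_hub [AddCommMonoid R] (m : ι) (a b : ι → R) :
    ∑ j, hubMatrix m a b m j = ∑ j ∈ univ.erase m, b j := by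
  rw [← sum_erase univ (hubMatrix_self m a b m)]
  exact sum_congr rfl fun j hj => by simp [hubMatrix, ne_of_mem_erase hj]

lemma sum_sum_hubMatrix [AddCommMonoid R] (m : ι) (a b : ι → R) :
    ∑ i, ∑ j, hubMatrix m a b i j = ∑ i ∈ univ.erase m, a i + ∑ j ∈ univ.erase m, b j := by
  rw [← sum_erase_add _ _ (mem_univ m), sum_hubMatrix_hub]
  congr 1
  exact sum_congr rfl fun i hi => sum_hubMatrix_of_ne (ne_of_mem_erase hi) a b

end HubMatrix

section JointSelection

variable [Fintype ι]

/-- Joint selection probability matrices: `P i j` is the probability that the first player is given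
arm `i` and the second arm `j`. Collisions `i = j` are excluded. -/
structure IsJointSelection_s10 [AddCommMonoidWithOne R] [LE R] (P : ι → ι → R) : Prop where
  diag_eq_zero : ∀ i, P i i = 0
  nonneg : ∀ i j, 0 ≤ P i j
  sum_eq_one : ∑ i, ∑ j, P i j = 1

/-- The loss `L(P)`: the squared distance of the satisfied preferences, which are the row sums for
the first player and the column sums for the second, from the preferences `A` and `B`. -/
def satisfactionLoss [CommRing R] (A B : ι → R) (P : ι → ι → R) : R :=
  ∑ i, ((∑ j, P i j) - A i) ^ 2 + ∑ j, ((∑ i, P i j) - B j) ^ 2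

end JointSelection

section UniformExcess

variable [Fintype ι] [DecidableEq ι] [CommRing R] {A B : ι → R} {m : ι} {ε : R}

lemma sum_erase_univ_add_const (m : ι) (f : ι → R) (c : R) :
    ∑ i ∈ univ.erase m, (f i + c) = ∑ i, f i - f m + (Fintype.card ι - 1) * c := by
  rw [sum_add_distrib, sum_erase_eq_sub (mem_univ m), sum_const, nsmul_eq_mul,
    cast_card_erase_of_mem (mem_univ m), card_univ]

lemma sum_sum_hubMatrix_add_const
    (hε : A m + B m - ∑ j, B j = 2 * (Fintype.card ι - 1) * ε) :
    ∑ i, ∑ j, hubMatrix m (fun i => A i + ε) (fun j => B j + ε) i j = ∑ i, A i := by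
  rw [sum_sum_hubMatrix, sum_erase_univ_add_const, sum_erase_univ_add_const]
  linear_combination -hε

lemma sum_sq_sum_hubMatrix_add_const_sub
    (hε : A m + B m - ∑ j, B j = 2 * (Fintype.card ι - 1) * ε) :
    ∑ i, ((∑ j, hubMatrix m (fun i => A i + ε) (fun j => B j + ε) i j) - A i) ^ 2 =
      Fintype.card ι * (Fintype.card ι - 1) * ε ^ 2 := by
  have deviation_hub : (∑ j, hubMatrix m (fun i => A i + ε) (fun j => B j + ε) m j) - A m =
      -((Fintype.card ι - 1) * ε) := by
    rw [sum_hubMatrix_hub, sum_erase_univ_add_const]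
    linear_combination -hε
  have deviation_of_ne : ∀ i ∈ univ.erase m,
      ((∑ j, hubMatrix m (fun i => A i + ε) (fun j => B j + ε) i j) - A i) ^ 2 = ε ^ 2 := by
    intro i hi
    rw [sum_hubMatrix_of_ne (ne_of_mem_erase hi), add_sub_cancel_left]
  rw [← sum_erase_add _ _ (mem_univ m), deviation_hub, sum_congr rfl deviation_of_ne, sum_const,
    nsmul_eq_mul, cast_card_erase_of_mem (mem_univ m), card_univ]
  ring

lemma satisfactionLoss_hubMatrix_add_const
    (hA : A m + B m - ∑ i, A i = 2 * (Fintype.card ι - 1) * ε)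
    (hB : A m + B m - ∑ j, B j = 2 * (Fintype.card ι - 1) * ε) :
    satisfactionLoss A B (hubMatrix m (fun i => A i + ε) (fun j => B j + ε)) =
      2 * Fintype.card ι * (Fintype.card ι - 1) * ε ^ 2 := by
  have column_loss :
      ∑ j, ((∑ i, hubMatrix m (fun i => A i + ε) (fun j => B j + ε) i j) - B j) ^ 2 =
        Fintype.card ι * (Fintype.card ι - 1) * ε ^ 2 := by
    simp only [← hubMatrix_swap m (fun i => A i + ε)]
    exact sum_sq_sum_hubMatrix_add_const_sub (by rwa [add_comm (B m)])
  rw [satisfactionLoss, sum_sq_sum_hubMatrix_add_const_sub hB, column_loss]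
  ring

end UniformExcess

theorem optimal_satisfaction_matrix_general {K : Type*} [Field K] [LinearOrder K]
    [IsStrictOrderedRing K] [Fintype ι] [DecidableEq ι] [Nontrivial ι] {A B : ι → K}
    (hA0 : ∀ i, 0 ≤ A i) (hB0 : ∀ i, 0 ≤ B i) (hA1 : ∑ i, A i = 1) (hB1 : ∑ i, B i = 1)
    {m : ι} (hSm : 1 ≤ A m + B m) :
    let n : K := Fintype.card ι
    let ε : K := (A m + B m - 1) / (2 * (n - 1))
    let P : ι → ι → K := hubMatrix m (fun i => A i + ε) (fun j => B j + ε)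
    IsJointSelection_s10 P ∧ satisfactionLoss A B P = n / (2 * (n - 1)) * (A m + B m - 1) ^ 2 := by
  intro n ε P
  have hn : 0 < n - 1 := sub_pos.2 (Nat.one_lt_cast.2 Fintype.one_lt_card)
  have hε0 : 0 ≤ ε := div_nonneg (sub_nonneg.2 hSm) (by positivity)
  have hε : A m + B m - 1 = 2 * (n - 1) * ε := (mul_div_cancel₀ _ (by positivity)).symm
  have hεA : A m + B m - ∑ i, A i = 2 * (n - 1) * ε := by rwa [hA1]
  have hεB : A m + B m - ∑ j, B j = 2 * (n - 1) * ε := by rwa [hB1]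
  refine ⟨⟨hubMatrix_self m _ _, ?nonneg, (sum_sum_hubMatrix_add_const hεB).trans hA1⟩, ?loss⟩
  case nonneg =>
    exact hubMatrix_nonneg (fun i _ => add_nonneg (hA0 i) hε0) fun j _ => add_nonneg (hB0 j) hε0
  case loss =>
    rw [satisfactionLoss_hubMatrix_add_const hεA hεB, hε]
    change 2 * n * (n - 1) * ε ^ 2 = n / (2 * (n - 1)) * (2 * (n - 1) * ε) ^ 2
    field_simp

/-- The explicit optimal satisfaction matrix: when the last arm is the most popular and its
popularity exceeds 1, the matrix `P̃` with `P̃ i (N−1) = A i + ε`, `P̃ (N−1) j = B j + ε`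
(off the diagonal) and zeros elsewhere, where `ε = (S (N−1) − 1) / (2 (N − 1))`, is a valid joint
selection probability matrix whose loss equals `N / (2 (N − 1)) · (S (N−1) − 1)²`. -/
theorem optimal_satisfaction_matrix
    (N : ℕ) (hN : 2 ≤ N) (A B : Fin N → ℝ)
    (hA0 : ∀ i, 0 ≤ A i) (hB0 : ∀ i, 0 ≤ B i)
    (hA1 : ∑ i, A i = 1) (hB1 : ∑ i, B i = 1)
    (last : Fin N) (hlast : last = ⟨N - 1, by omega⟩)
    (hm : ∀ i, A i + B i ≤ A last + B last) (hSm : 1 < A last + B last) :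
    let ε : ℝ := (A last + B last - 1) / (2 * ((N : ℝ) - 1))
    let P : Fin N → Fin N → ℝ := fun i j =>
      if i ≠ last ∧ j = last then A i + ε
      else if i = last ∧ j ≠ last then B j + ε
      else 0
    (∀ i, P i i = 0) ∧ (∀ i j, 0 ≤ P i j) ∧ (∑ i, ∑ j, P i j = 1) ∧
    (∑ i, ((∑ j, P i j) - A i) ^ 2 + ∑ j, ((∑ i, P i j) - B j) ^ 2) =
      (N : ℝ) / (2 * ((N : ℝ) - 1)) * (A last + B last - 1) ^ 2 := by
  have : Nontrivial (Fin N) := Fin.nontrivial_iff_two_le.2 hN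
  have general := optimal_satisfaction_matrix_general hA0 hB0 hA1 hB1 hSm.le
  simp only [Fintype.card_fin] at general
  exact ⟨general.1.diag_eq_zero, general.1.nonneg, general.1.sum_eq_one, general.2⟩
end

section
/- Let N ≥ 2 be an integer and let A, B : Fin N → ℝ be preference vectors (nonnegative entries, each summing to 1). If there exists an arm i with A i + B i > 1, then there is no joint selection probability matrix P (zero diagonal, nonnegative entries, total sum 1) whose row sums equal A and whose column sums equal B; that is, the loss L(P) cannot be zero. -/
/-!
The row and the column of arm `i` meet only in the entry `P i i`, so in a nonnegative matrix their
sums together are at most the total mass plus `P i i`. Zero loss makes these sums `A i` and `B i`;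
with total mass `1` and zero diagonal this forces `A i + B i ≤ 1`.
-/

theorem sum_row_add_sum_col_le {ι M : Type*} [Fintype ι] [AddCommMonoid M] [PartialOrder M]
    [IsOrderedAddMonoid M] {P : ι → ι → M} (hP : ∀ k l, 0 ≤ P k l) (i : ι) :
    ∑ l, P i l + ∑ k, P k i ≤ ∑ k, ∑ l, P k l + P i i := by
  classical
  have col_le_rows : ∑ k ∈ {i}ᶜ, P k i ≤ ∑ k ∈ {i}ᶜ, ∑ l, P k l :=
    Finset.sum_le_sum fun k _ ↦
      Finset.single_le_sum (fun l _ ↦ hP k l) (Finset.mem_univ i)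
  calc
    ∑ l, P i l + ∑ k, P k i = ∑ l, P i l + ∑ k ∈ {i}ᶜ, P k i + P i i := by
      rw [Fintype.sum_eq_add_sum_compl i fun k ↦ P k i, add_comm (P i i), add_assoc]
    _ ≤ ∑ l, P i l + ∑ k ∈ {i}ᶜ, ∑ l, P k l + P i i := by gcongr
    _ = ∑ k, ∑ l, P k l + P i i := by
      rw [← Fintype.sum_eq_add_sum_compl i fun k ↦ ∑ l, P k l]

/-- The loss of a selection matrix `P` against the preferences `A` and `B`: the squared distance of
its row sums to `A` plus that of its column sums to `B`. -/
def selectionLoss {ι κ R : Type*} [Fintype ι] [Fintype κ] [Ring R]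
    (A : ι → R) (B : κ → R) (P : ι → κ → R) : R :=
  ∑ k, ((∑ l, P k l) - A k) ^ 2 + ∑ l, ((∑ k, P k l) - B l) ^ 2

section OrderedRing

variable {ι κ R : Type*} [Fintype ι] [Fintype κ] [Ring R] [LinearOrder R] [IsStrictOrderedRing R]

theorem sum_sq_sub_eq_zero_iff {f g : ι → R} : ∑ k, (f k - g k) ^ 2 = 0 ↔ ∀ k, f k = g k := by
  simp only [Finset.sum_eq_zero_iff_of_nonneg fun k _ ↦ sq_nonneg (f k - g k), Finset.mem_univ,
    forall_const, sq_eq_zero_iff, sub_eq_zero]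

theorem selectionLoss_eq_zero_iff {A : ι → R} {B : κ → R} {P : ι → κ → R} :
    selectionLoss A B P = 0 ↔ (∀ k, ∑ l, P k l = A k) ∧ ∀ l, ∑ k, P k l = B l := by
  rw [selectionLoss,
    add_eq_zero_iff_of_nonneg (Finset.sum_nonneg fun _ _ ↦ sq_nonneg _)
      (Finset.sum_nonneg fun _ _ ↦ sq_nonneg _),
    sum_sq_sub_eq_zero_iff, sum_sq_sub_eq_zero_iff]

theorem no_zero_loss_of_popularity_gt_one_general {A B : ι → R} {i : ι} (hi : 1 < A i + B i) :
    ¬ ∃ P : ι → ι → R,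
        (∀ k, P k k = 0) ∧ (∀ k l, 0 ≤ P k l) ∧ (∑ k, ∑ l, P k l = 1) ∧
        selectionLoss A B P = 0 := by
  rintro ⟨P, diag_zero, nonneg, total, loss_zero⟩
  obtain ⟨row_sum, col_sum⟩ := selectionLoss_eq_zero_iff.mp loss_zero
  have popularity_le_one : A i + B i ≤ 1 := by
    simpa only [row_sum i, col_sum i, total, diag_zero i, add_zero] using
      sum_row_add_sum_col_le nonneg i
  exact hi.not_ge popularity_le_one

end OrderedRing

/-- If some arm has popularity `A i + B i > 1`, then no conflict-free joint selection probability
matrix achieves zero loss. -/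
theorem no_zero_loss_of_popularity_gt_one
    (N : ℕ) (hN : 2 ≤ N) (A B : Fin N → ℝ)
    (hA0 : ∀ i, 0 ≤ A i) (hB0 : ∀ i, 0 ≤ B i)
    (hA1 : ∑ i, A i = 1) (hB1 : ∑ i, B i = 1)
    (i : Fin N) (hSi : 1 < A i + B i) :
    ¬ ∃ P : Fin N → Fin N → ℝ,
        (∀ k, P k k = 0) ∧ (∀ k l, 0 ≤ P k l) ∧ (∑ k, ∑ l, P k l = 1) ∧
        (∑ k, ((∑ l, P k l) - A k) ^ 2 + ∑ l, ((∑ k, P k l) - B l) ^ 2) = 0 :=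
  no_zero_loss_of_popularity_gt_one_general hSi
end

section
/- Let N ≥ 2 be an integer and A, B : Fin N → ℝ be preference vectors (nonnegative entries, each summing to 1). A joint selection probability matrix P with loss L(P) = 0 exists if and only if A i + B i ≤ 1 for every arm i. -/
/-!
A zero-loss matrix is a transport plan from `A` to `B` that puts no mass on the diagonal. Row `k`
and column `k` of such a plan meet only in the empty entry `(k, k)`, so their masses `A k` and
`B k` add up to at most the total mass. Conversely, take a plan of minimal trace. If `P k k > 0`
while `P a b > 0` for some `a, b ≠ k`, then rerouting `k → k` and `a → b` as `k → b` and `a → k`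
lowers the trace; so all the mass lies in row `k` and column `k`, and the total is
`A k + B k - P k k < A k + B k`.
-/

open Finset

theorem add_sum_sum_eq_row_add_col_add_sum_compl {ι κ M : Type*} [Fintype ι] [Fintype κ]
    [DecidableEq ι] [DecidableEq κ] [AddCommMonoid M] (P : ι → κ → M) (k : ι) (l : κ) :
    P k l + ∑ i, ∑ j, P i j =
      ∑ j, P k j + ∑ i, P i l + ∑ i ∈ {k}ᶜ, ∑ j ∈ {l}ᶜ, P i j := by
  have split_rows : ∑ i, ∑ j, P i j = ∑ j, P k j + ∑ i ∈ {k}ᶜ, ∑ j, P i j :=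
    Fintype.sum_eq_add_sum_compl k _
  have split_col : ∑ i, P i l = P k l + ∑ i ∈ {k}ᶜ, P i l := Fintype.sum_eq_add_sum_compl k _
  have split_block : ∑ i ∈ {k}ᶜ, ∑ j, P i j =
      ∑ i ∈ {k}ᶜ, P i l + ∑ i ∈ {k}ᶜ, ∑ j ∈ {l}ᶜ, P i j := by
    simp only [← sum_add_distrib, ← Fintype.sum_eq_add_sum_compl]
  rw [split_rows, split_col, split_block]
  abel

/-- A transport plan from `A` to `B`: a nonnegative matrix with row sums `A` and column sums `B`.
The masses of `A` and `B` need not be normalized to `1`. -/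
structure IsCoupling {ι κ M : Type*} [Fintype ι] [Fintype κ] [AddCommMonoid M] [LE M]
    (A : ι → M) (B : κ → M) (P : ι → κ → M) : Prop where
  nonneg : ∀ i j, 0 ≤ P i j
  row_sum : ∀ i, ∑ j, P i j = A i
  col_sum : ∀ j, ∑ i, P i j = B j

/-- The loss `L(P)`: the squared distance of the satisfied preferences (the marginals of `P`) from
the preferences `A` and `B`. -/
def preferenceLoss {ι κ R : Type*} [Fintype ι] [Fintype κ] [Ring R]
    (A : ι → R) (B : κ → R) (P : ι → κ → R) : R :=
  ∑ i, ((∑ j, P i j) - A i) ^ 2 + ∑ j, ((∑ i, P i j) - B j) ^ 2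

/-- The matrix obtained from `P` by moving mass `t` from each of the entries `(k, l)` and `(a, b)`
to each of `(k, b)` and `(a, l)`, which preserves all row and column sums. -/
def rectangleSwap {ι κ R : Type*} [DecidableEq ι] [DecidableEq κ] [Ring R]
    (P : ι → κ → R) (k a : ι) (l b : κ) (t : R) : ι → κ → R :=
  fun i j => P i j - t * ((Pi.single k 1 - Pi.single a 1 : ι → R) i *
    (Pi.single l 1 - Pi.single b 1 : κ → R) j)

section Mass

variable {ι κ M : Type*} [Fintype ι] [Fintype κ] [AddCommMonoid M]
  {A : ι → M} {B : κ → M} {P : ι → κ → M}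

theorem isCoupling_iff [LE M] : IsCoupling A B P ↔
    (∀ i j, 0 ≤ P i j) ∧ (∀ i, ∑ j, P i j = A i) ∧ ∀ j, ∑ i, P i j = B j :=
  ⟨fun hP => ⟨hP.nonneg, hP.row_sum, hP.col_sum⟩,
    fun ⟨nonneg, row_sum, col_sum⟩ => ⟨nonneg, row_sum, col_sum⟩⟩

theorem IsCoupling.sum_sum [LE M] (hP : IsCoupling A B P) : ∑ i, ∑ j, P i j = ∑ i, A i :=
  sum_congr rfl fun i _ => hP.row_sum i

theorem IsCoupling.add_add_sum_compl [LE M] [DecidableEq ι] [DecidableEq κ]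
    (hP : IsCoupling A B P) (k : ι) (l : κ) :
    A k + B l + ∑ i ∈ {k}ᶜ, ∑ j ∈ {l}ᶜ, P i j = P k l + ∑ i, A i := by
  rw [← hP.row_sum k, ← hP.col_sum l, ← hP.sum_sum, add_sum_sum_eq_row_add_col_add_sum_compl]

theorem IsCoupling.add_le [PartialOrder M] [IsOrderedAddMonoid M] (hP : IsCoupling A B P)
    (k : ι) (l : κ) : A k + B l ≤ P k l + ∑ i, A i := by
  classical
  rw [← hP.add_add_sum_compl k l]
  exact le_add_of_nonneg_right (sum_nonneg fun i _ => sum_nonneg fun j _ => hP.nonneg i j)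

end Mass

section OrderedRing

variable {ι κ R : Type*} [Fintype ι] [CommRing R] [LinearOrder R] [IsStrictOrderedRing R]

theorem sum_sub_sq_eq_zero_iff {f g : ι → R} : ∑ i, (f i - g i) ^ 2 = 0 ↔ ∀ i, f i = g i := by
  simp only [sum_eq_zero_iff_of_nonneg fun _ _ => sq_nonneg _, mem_univ, true_imp_iff,
    sq_eq_zero_iff, sub_eq_zero]

theorem preferenceLoss_eq_zero_iff [Fintype κ] {A : ι → R} {B : κ → R} {P : ι → κ → R} :
    preferenceLoss A B P = 0 ↔ (∀ i, ∑ j, P i j = A i) ∧ ∀ j, ∑ i, P i j = B j := by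
  rw [preferenceLoss, add_eq_zero_iff_of_nonneg (sum_nonneg fun _ _ => sq_nonneg _)
    (sum_nonneg fun _ _ => sq_nonneg _), sum_sub_sq_eq_zero_iff, sum_sub_sq_eq_zero_iff]

theorem isCoupling_iff_preferenceLoss_eq_zero [Fintype κ] {A : ι → R} {B : κ → R}
    {P : ι → κ → R} : IsCoupling A B P ↔ (∀ i j, 0 ≤ P i j) ∧ preferenceLoss A B P = 0 := by
  rw [isCoupling_iff, preferenceLoss_eq_zero_iff]

theorem isCoupling_rectangleSwap [Fintype κ] [DecidableEq ι] [DecidableEq κ] {A : ι → R}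
    {B : κ → R} {P : ι → κ → R} (hP : IsCoupling A B P) {k a : ι} {l b : κ} {t : R}
    (ht : 0 ≤ t) (hkl : t ≤ P k l) (hab : t ≤ P a b) :
    IsCoupling A B (rectangleSwap P k a l b t) where
  nonneg i j := by
    have hij := hP.nonneg i j
    simp only [rectangleSwap, Pi.sub_apply, Pi.single_apply]
    split_ifs <;> subst_vars <;> linarith
  row_sum i := by
    simp [rectangleSwap, sum_sub_distrib, ← mul_sum, hP.row_sum]
  col_sum j := by
    simp [rectangleSwap, sum_sub_distrib, ← mul_sum, ← sum_mul, hP.col_sum]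

theorem sum_diag_rectangleSwap_le [DecidableEq ι] (P : ι → ι → R) {k a b : ι} {t : R}
    (ht : 0 ≤ t) (hak : a ≠ k) (hbk : b ≠ k) :
    ∑ i, rectangleSwap P k a k b t i i ≤ ∑ i, P i i - t := by
  have one_le : 1 ≤ (Pi.single k 1 - Pi.single a 1 : ι → R) ⬝ᵥ (Pi.single k 1 - Pi.single b 1) := by
    by_cases hab : a = b <;> simp [hbk, hak.symm, hbk.symm, hab]
  calc ∑ i, rectangleSwap P k a k b t i i
      = ∑ i, P i i -
          t * ((Pi.single k 1 - Pi.single a 1 : ι → R) ⬝ᵥ (Pi.single k 1 - Pi.single b 1)) := by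
        simp only [rectangleSwap, sum_sub_distrib, ← mul_sum, dotProduct]
    _ ≤ ∑ i, P i i - t := sub_le_sub_left (le_mul_of_one_le_right ht one_le) _

theorem IsCoupling.eq_zero_of_isMinOn_trace {A B : ι → R} {P : ι → ι → R}
    (hP : IsCoupling A B P) (hmin : IsMinOn (fun Q => ∑ i, Q i i) {Q | IsCoupling A B Q} P)
    {k a b : ι} (hk : 0 < P k k) (hak : a ≠ k) (hbk : b ≠ k) : P a b = 0 := by
  classical
  by_contra hab
  have t_pos : 0 < min (P k k) (P a b) := lt_min hk ((hP.nonneg a b).lt_of_ne' hab)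
  have swap_coupling := isCoupling_rectangleSwap hP t_pos.le (min_le_left _ _) (min_le_right _ _)
  have trace_le := sum_diag_rectangleSwap_le P t_pos.le hak hbk
  have le_trace := isMinOn_iff.mp hmin _ swap_coupling
  linarith

theorem IsCoupling.diag_eq_zero_of_isMinOn_trace {A B : ι → R} {P : ι → ι → R}
    (hP : IsCoupling A B P) (hmin : IsMinOn (fun Q => ∑ i, Q i i) {Q | IsCoupling A B Q} P)
    {k : ι} (hk : A k + B k ≤ ∑ i, A i) : P k k = 0 := by
  classical
  by_contra hne
  have pos : 0 < P k k := (hP.nonneg k k).lt_of_ne' hne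
  have block_eq_zero : ∑ i ∈ {k}ᶜ, ∑ j ∈ {k}ᶜ, P i j = 0 :=
    sum_eq_zero fun a ha => sum_eq_zero fun b hb =>
      hP.eq_zero_of_isMinOn_trace hmin pos (by simpa using ha) (by simpa using hb)
  have mass := hP.add_add_sum_compl k k
  linarith

end OrderedRing

theorem isCoupling_mul_div {ι κ K : Type*} [Fintype ι] [Fintype κ] [Field K] [LinearOrder K]
    [IsStrictOrderedRing K] {A : ι → K} {B : κ → K} (hA : ∀ i, 0 ≤ A i) (hB : ∀ j, 0 ≤ B j)
    (hAB : ∑ i, A i = ∑ j, B j) : IsCoupling A B (fun i j => A i * B j / ∑ i, A i) where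
  nonneg i j := div_nonneg (mul_nonneg (hA i) (hB j)) (sum_nonneg fun i _ => hA i)
  -- If the total mass is `0`, the quotients are the junk value `0`, but then `A` and `B` vanish.
  row_sum i := by
    rw [← sum_div, ← mul_sum, ← hAB]
    exact mul_div_cancel_of_imp fun h =>
      (sum_eq_zero_iff_of_nonneg fun i _ => hA i).mp h i (mem_univ i)
  col_sum j := by
    rw [← sum_div, ← sum_mul, hAB]
    exact mul_div_cancel_left_of_imp fun h =>
      (sum_eq_zero_iff_of_nonneg fun j _ => hB j).mp h j (mem_univ j)

theorem isCompact_setOf_isCoupling {ι κ : Type*} [Fintype ι] [Fintype κ]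
    (A : ι → ℝ) (B : κ → ℝ) : IsCompact {P | IsCoupling A B P} := by
  have subset_Icc : {P | IsCoupling A B P} ⊆ Set.Icc 0 (fun i _ => A i) := fun P hP =>
    ⟨hP.nonneg, fun i j => (single_le_sum (fun j _ => hP.nonneg i j) (mem_univ j)).trans_eq
      (hP.row_sum i)⟩
  have closed : IsClosed {P | IsCoupling A B P} := by
    simp only [isCoupling_iff, Set.ofPred_and, Set.ofPred_forall]
    refine .inter ?nonneg (.inter ?row_sum ?col_sum)
    case nonneg =>
      exact isClosed_iInter fun i => isClosed_iInter fun j =>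
        isClosed_le (by fun_prop) (by fun_prop)
    case row_sum => exact isClosed_iInter fun i => isClosed_eq (by fun_prop) (by fun_prop)
    case col_sum => exact isClosed_iInter fun j => isClosed_eq (by fun_prop) (by fun_prop)
  exact isCompact_Icc.of_isClosed_subset closed subset_Icc

theorem exists_isCoupling_diag_eq_zero_iff {ι : Type*} [Fintype ι] {A B : ι → ℝ}
    (hA : ∀ i, 0 ≤ A i) (hB : ∀ i, 0 ≤ B i) (hAB : ∑ i, A i = ∑ i, B i) :
    (∃ P, IsCoupling A B P ∧ ∀ i, P i i = 0) ↔ ∀ i, A i + B i ≤ ∑ i, A i := by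
  constructor
  · rintro ⟨P, hP, diag⟩ k
    simpa only [diag, zero_add] using hP.add_le k k
  · intro h
    obtain ⟨P, hP, hmin⟩ := (isCompact_setOf_isCoupling A B).exists_isMinOn
      ⟨_, isCoupling_mul_div hA hB hAB⟩ (f := fun P => ∑ i, P i i) (by fun_prop)
    exact ⟨P, hP, fun k => hP.diag_eq_zero_of_isMinOn_trace hmin (h k)⟩

theorem zero_loss_iff_popularity_le_one_general {ι : Type*} [Fintype ι] {A B : ι → ℝ} {s : ℝ}
    (hA : ∀ i, 0 ≤ A i) (hB : ∀ i, 0 ≤ B i) (hAs : ∑ i, A i = s) (hBs : ∑ i, B i = s) :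
    (∃ P : ι → ι → ℝ, (∀ k, P k k = 0) ∧ (∀ k l, 0 ≤ P k l) ∧ (∑ k, ∑ l, P k l = s) ∧
        preferenceLoss A B P = 0) ↔
      ∀ i, A i + B i ≤ s := by
  rw [← hAs, ← exists_isCoupling_diag_eq_zero_iff hA hB (hAs.trans hBs.symm)]
  refine exists_congr fun P => ⟨?_, ?_⟩
  · rintro ⟨diag, nonneg, -, loss⟩
    exact ⟨isCoupling_iff_preferenceLoss_eq_zero.mpr ⟨nonneg, loss⟩, diag⟩
  · rintro ⟨hP, diag⟩
    exact ⟨diag, hP.nonneg, hP.sum_sum, (isCoupling_iff_preferenceLoss_eq_zero.mp hP).2⟩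

/-- Characterization of zero loss: a conflict-free joint selection probability matrix with zero
loss exists if and only if every popularity `A i + B i` is at most 1. -/
theorem zero_loss_iff_popularity_le_one
    (N : ℕ) (hN : 2 ≤ N) (A B : Fin N → ℝ)
    (hA0 : ∀ i, 0 ≤ A i) (hB0 : ∀ i, 0 ≤ B i)
    (hA1 : ∑ i, A i = 1) (hB1 : ∑ i, B i = 1) :
    (∃ P : Fin N → Fin N → ℝ,
        (∀ k, P k k = 0) ∧ (∀ k l, 0 ≤ P k l) ∧ (∑ k, ∑ l, P k l = 1) ∧
        (∑ k, ((∑ l, P k l) - A k) ^ 2 + ∑ l, ((∑ k, P k l) - B l) ^ 2) = 0) ↔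
      ∀ i, A i + B i ≤ 1 :=
  zero_loss_iff_popularity_le_one_general hA0 hB0 hA1 hB1
end

section
/- Let M ≥ 2 and N ≥ 1 be integers and let pref : Fin M → Fin N → ℝ be preference profiles for M players (pref x i ≥ 0 for all x, i and ∑ i, pref x i = 1 for each player x). If there exists an arm i with ∑ x, pref x i > 1, then there is no conflict-free joint selection tensor p such that for every player x and every arm i, the satisfied preference π x i equals pref x i. -/
/-!
When no two players ever select the same arm, the events that player `x` selects arm `i`, for `i`
fixed and `x` ranging over the players, are pairwise disjoint. Their probabilities therefore add up
to at most `1`, and this sum is the popularity of arm `i` as soon as its preferences are satisfied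
exactly.
-/

/-- A tensor of joint selections is conflict-free if it vanishes whenever two players share an arm.
Nonnegativity and normalization are kept as separate conditions. -/
def IsConflictFree {ι α R : Type*} [Zero R] (p : (ι → α) → R) : Prop :=
  ∀ d, ¬ Function.Injective d → p d = 0

section

variable {ι α R : Type*} [Fintype ι] [DecidableEq ι] [Fintype α] [DecidableEq α]

/-- The satisfied preference `π x i` of player `x` for arm `i`: the total weight that the joint
selection tensor `p` puts on the selections in which `x` receives `i`. -/
def satisfiedPreference [AddCommMonoid R] (p : (ι → α) → R) (x : ι) (i : α) : R :=
  ∑ d with d x = i, p d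

theorem pairwise_disjoint_filter_injective_apply_eq (i : α) :
    Pairwise (Function.onFun Disjoint fun x : ι ↦
      ({d | d x = i ∧ Function.Injective d} : Finset (ι → α))) := by
  intro x y hxy
  refine Finset.disjoint_filter.mpr fun d _ ⟨hx, hd⟩ ⟨hy, _⟩ ↦ ?_
  exact hxy (hd (hx.trans hy.symm))

namespace IsConflictFree

theorem satisfiedPreference_eq [AddCommMonoid R] {p : (ι → α) → R} (hp : IsConflictFree p)
    (x : ι) (i : α) :
    satisfiedPreference p x i = ∑ d with d x = i ∧ Function.Injective d, p d := by
  rw [satisfiedPreference, ← Finset.filter_filter]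
  exact (Finset.sum_filter_of_ne fun d _ hd ↦ not_imp_comm.mp (hp d) hd).symm

theorem sum_satisfiedPreference_le_sum [AddCommMonoid R] [PartialOrder R] [IsOrderedAddMonoid R]
    {p : (ι → α) → R} (hp : IsConflictFree p) (hp_nonneg : ∀ d, 0 ≤ p d) (i : α) :
    ∑ x, satisfiedPreference p x i ≤ ∑ d, p d :=
  calc
    ∑ x, satisfiedPreference p x i
      = ∑ x, ∑ d with d x = i ∧ Function.Injective d, p d :=
        Finset.sum_congr rfl fun x _ ↦ hp.satisfiedPreference_eq x i
    _ = ∑ d ∈ Finset.univ.biUnion fun x ↦ {d | d x = i ∧ Function.Injective d}, p d :=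
        (Finset.sum_biUnion
          ((pairwise_disjoint_filter_injective_apply_eq i).set_pairwise _)).symm
    _ ≤ ∑ d, p d := Finset.sum_le_univ_sum_of_nonneg hp_nonneg

end IsConflictFree

theorem no_zero_loss_tensor_of_popularity_gt_one_general
    [AddCommMonoidWithOne R] [PartialOrder R] [IsOrderedAddMonoid R]
    (pref : ι → α → R) (i : α) (hSi : 1 < ∑ x, pref x i) :
    ¬ ∃ p : (ι → α) → R,
        (∀ d, 0 ≤ p d) ∧ (∑ d, p d = 1) ∧ IsConflictFree p ∧
        (∀ x, satisfiedPreference p x i = pref x i) := by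
  rintro ⟨p, hp_nonneg, hp_sum, hp, hpref⟩
  refine hSi.not_ge ?_
  calc
    ∑ x, pref x i = ∑ x, satisfiedPreference p x i :=
      Finset.sum_congr rfl fun x _ ↦ (hpref x).symm
    _ ≤ ∑ d, p d := hp.sum_satisfiedPreference_le_sum hp_nonneg i
    _ = 1 := hp_sum

end

/-- Theorem 2.3: with `M` players and `N` arms, if some arm's popularity `∑ x, pref x i` exceeds 1,
then no conflict-free joint selection tensor satisfies every player's preference exactly. -/
theorem no_zero_loss_tensor_of_popularity_gt_one
    (M N : ℕ) (hM : 2 ≤ M) (hN : 1 ≤ N)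
    (pref : Fin M → Fin N → ℝ)
    (hpref0 : ∀ x i, 0 ≤ pref x i)
    (hpref1 : ∀ x, ∑ i, pref x i = 1)
    (i : Fin N) (hSi : 1 < ∑ x, pref x i) :
    ¬ ∃ p : (Fin M → Fin N) → ℝ,
        (∀ d, 0 ≤ p d) ∧ (∑ d, p d = 1) ∧
        (∀ d, ¬ Function.Injective d → p d = 0) ∧
        (∀ x k, ∑ d ∈ Finset.univ.filter (fun d : Fin M → Fin N => d x = k), p d
          = pref x k) := by
  rintro ⟨p, hp_nonneg, hp_sum, hp, hpref⟩
  exact no_zero_loss_tensor_of_popularity_gt_one_general pref i hSi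
    ⟨p, hp_nonneg, hp_sum, hp, fun x ↦ hpref x i⟩
end
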